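/- arXiv:1309.5724 — 3 statements merged into one kernel-verified Lean document; each statement's English description precedes it below -/
import Mathlib

section
/- Let 𝒞 be a cut-partition of a finite connected simple graph G. Then the following are equivalent: (i) between every pair of vertices of G there is a shortest path using at most one edge of each cut C ∈ 𝒞; (ii) every shortest path in G uses at most one edge of each cut C ∈ 𝒞; (iii) for every nonempty vertex set V' ⊆ V(G), the convex hull conv(V') equals the intersection ∩_{C∈𝒞} C(V'); (iv) for all vertices v, w, conv({v,w}) = ∩_{C∈𝒞} C({v,w}). -/
/-- A set of vertices is (geodesically) convex. -/
def GConvex {V : Type*} (G : SimpleGraph V) (S : Set V) : Prop :=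
  ∀ u ∈ S, ∀ w ∈ S, ∀ x : V, G.dist u x + G.dist x w = G.dist u w → x ∈ S

/-- The convex hull of a set of vertices: the smallest convex set containing it. -/
def GConvexHull {V : Type*} (G : SimpleGraph V) (S : Set V) : Set V :=
  ⋂₀ {T : Set V | GConvex G T ∧ S ⊆ T}

/-- A cut of a connected simple graph: an inclusion-minimal set of edges whose
removal disconnects the graph. -/
def IsCut {V : Type*} (G : SimpleGraph V) (C : Set (Sym2 V)) : Prop :=
  C ⊆ G.edgeSet ∧ ¬ (G.deleteEdges C).Connected ∧
    ∀ C' : Set (Sym2 V), C' ⊂ C → (G.deleteEdges C').Connected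

/-- A cut-partition: a set of cuts partitioning the edge set. -/
def IsCutPartition {V : Type*} (G : SimpleGraph V) (𝒞 : Set (Set (Sym2 V))) : Prop :=
  (∀ C ∈ 𝒞, IsCut G C) ∧ 𝒞.PairwiseDisjoint id ∧ ⋃₀ 𝒞 = G.edgeSet

open Classical in
/-- The number of edges of a walk (with multiplicity) belonging to a given edge set. -/
noncomputable def cutUse {V : Type*} (G : SimpleGraph V) {u w : V} (p : G.Walk u w)
    (C : Set (Sym2 V)) : ℕ :=
  p.edges.countP fun e => decide (e ∈ C)

/-- A cut separates a vertex set `V'` if `V'` meets both sides of the cut. -/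
def CutSeparates {V : Type*} (G : SimpleGraph V) (C : Set (Sym2 V)) (V' : Set V) : Prop :=
  ∃ a ∈ V', ∃ b ∈ V', ¬ (G.deleteEdges C).Reachable a b

open Classical in
/-- `C(V')`: the whole vertex set if `C` separates `V'`, and the side of `C`
containing `V'` otherwise. -/
noncomputable def cutRegion {V : Type*} (G : SimpleGraph V) (C : Set (Sym2 V))
    (V' : Set V) : Set V :=
  if CutSeparates G C V' then Set.univ
  else {x : V | ∃ a ∈ V', (G.deleteEdges C).Reachable x a}

/-!
Let `d(u, w)` be the distance and `s(u, w)` the number of cuts of `𝒞` separating `u` from `w`. A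
walk uses a cut an odd number of times exactly when the cut separates its ends, and every edge lies
in exactly one cut, so a walk from `u` to `w` has length at least `s(u, w)`, with equality iff it
uses each cut at most once. Hence (i) and (ii) both say that `d = s`.

As a cut has only two sides, the cuts separating `u` from `w` are those separating exactly one of
the pairs `u, x` and `x, w`. So `d = s` amounts to: if `x` lies between `u` and `w`, then no cut
separates `x` from both. This is the convexity statement on which (iii) and (iv) rest.
-/

open scoped symmDiff

section SymmDiff

variable {α : Type*} {s t : Set α}

theorem ncard_symmDiff_add_two_mul_ncard_inter (hs : s.Finite) (ht : t.Finite) :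
    (s ∆ t).ncard + 2 * (s ∩ t).ncard = s.ncard + t.ncard := by
  have hsdiff : (s ∆ t).ncard = (s \ t).ncard + (t \ s).ncard :=
    Set.ncard_union_eq disjoint_sdiff_sdiff hs.sdiff ht.sdiff
  have hst := Set.ncard_inter_add_ncard_sdiff_eq_ncard s t hs
  have hts := Set.ncard_inter_add_ncard_sdiff_eq_ncard t s ht
  rw [Set.inter_comm] at hts
  lia

theorem ncard_symmDiff_le (hs : s.Finite) (ht : t.Finite) :
    (s ∆ t).ncard ≤ s.ncard + t.ncard :=
  (Nat.le_add_right _ _).trans_eq (ncard_symmDiff_add_two_mul_ncard_inter hs ht)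

theorem ncard_symmDiff_eq_add_iff (hs : s.Finite) (ht : t.Finite) :
    (s ∆ t).ncard = s.ncard + t.ncard ↔ Disjoint s t := by
  rw [← ncard_symmDiff_add_two_mul_ncard_inter hs ht, Set.disjoint_iff_inter_eq_empty,
    ← Set.ncard_eq_zero (hs.inter_of_left t)]
  lia

end SymmDiff

section Cuts

variable {V : Type*} {G : SimpleGraph V} {C : Set (Sym2 V)} {a b u v w x : V}

theorem exists_adj_of_dist_eq_add_one {n : ℕ} (h : G.dist u w = n + 1) :
    ∃ v, G.Adj u v ∧ G.dist v w = n := by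
  obtain ⟨p, hp⟩ := SimpleGraph.exists_walk_of_dist_ne_zero (h.trans_ne n.succ_ne_zero)
  cases p with
  | nil => simp at h
  | @cons _ v _ huv p =>
    have htri := huv.reachable.dist_triangle_left w
    have hle := SimpleGraph.dist_le p
    rw [SimpleGraph.dist_eq_one_iff_adj.2 huv] at htri
    rw [SimpleGraph.Walk.length_cons] at hp
    exact ⟨v, huv, by lia⟩

theorem gConvex_gConvexHull (G : SimpleGraph V) (S : Set V) : GConvex G (GConvexHull G S) :=
  fun u hu w hw x hx T hT => hT.1 u (hu T hT) w (hw T hT) x hx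

theorem subset_gConvexHull (G : SimpleGraph V) (S : Set V) : S ⊆ GConvexHull G S :=
  Set.subset_sInter fun _ hT => hT.2

/-- By minimality of the cut, putting back the single edge `ab` reconnects the graph. -/
theorem IsCut.reachable_or_reachable (hC : IsCut G C) (hab : s(a, b) ∈ C) (v : V) :
    (G.deleteEdges C).Reachable v a ∨ (G.deleteEdges C).Reachable v b := by
  have hside_of_walk {v w : V} (p : (G.deleteEdges (C \ {s(a, b)})).Walk v w)
      (hw : (G.deleteEdges C).Reachable w a ∨ (G.deleteEdges C).Reachable w b) :
      (G.deleteEdges C).Reachable v a ∨ (G.deleteEdges C).Reachable v b := by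
    induction p with
    | nil => exact hw
    | @cons x y z hxy _ ih =>
      rw [SimpleGraph.deleteEdges_adj] at hxy
      by_cases hxC : s(x, y) ∈ C
      · have hxe : s(x, y) = s(a, b) := by_contra fun hne => hxy.2 ⟨hxC, hne⟩
        rcases Sym2.eq_iff.1 hxe with ⟨rfl, -⟩ | ⟨rfl, -⟩
        exacts [.inl (.refl _), .inr (.refl _)]
      · have hr : (G.deleteEdges C).Reachable x y :=
          (SimpleGraph.deleteEdges_adj.2 ⟨hxy.1, hxC⟩).reachable
        exact (ih hw).imp hr.trans hr.trans
  obtain ⟨p⟩ := (hC.2.2 _ (Set.sdiff_singleton_ssubset.2 hab)).preconnected v a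
  exact hside_of_walk p (.inl (.refl a))

theorem IsCut.not_reachable (hC : IsCut G C) (hab : s(a, b) ∈ C) :
    ¬ (G.deleteEdges C).Reachable a b := by
  intro h
  have hr (v : V) : (G.deleteEdges C).Reachable v b :=
    (hC.reachable_or_reachable hab v).elim (·.trans h) id
  exact hC.2.1 { preconnected := fun v w => (hr v).trans (hr w).symm, nonempty := ⟨a⟩ }

theorem IsCut.reachable_iff_of_adj (hC : IsCut G C) (h : G.Adj u v) :
    (G.deleteEdges C).Reachable u v ↔ s(u, v) ∉ C :=
  ⟨fun hr hmem => hC.not_reachable hmem hr,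
    fun hmem => (SimpleGraph.deleteEdges_adj.2 ⟨h, hmem⟩).reachable⟩

theorem IsCut.nonempty (hG : G.Connected) (hC : IsCut G C) : C.Nonempty := by
  rw [Set.nonempty_iff_ne_empty]
  rintro rfl
  exact hC.2.1 (by rwa [SimpleGraph.deleteEdges_empty])

theorem IsCut.reachable_of_not_reachable (hG : G.Connected) (hC : IsCut G C)
    (hvu : ¬ (G.deleteEdges C).Reachable v u) (hvw : ¬ (G.deleteEdges C).Reachable v w) :
    (G.deleteEdges C).Reachable u w := by
  obtain ⟨⟨a, b⟩, hab⟩ := hC.nonempty hG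
  have hside := hC.reachable_or_reachable hab
  rcases hside v with hv | hv <;> rcases hside u with hu | hu <;> rcases hside w with hw | hw <;>
    first
    | exact hu.trans hw.symm
    | exact absurd (hv.trans hu.symm) hvu
    | exact absurd (hv.trans hw.symm) hvw

theorem IsCut.reachable_iff_reachable_iff (hG : G.Connected) (hC : IsCut G C) (u v w : V) :
    (G.deleteEdges C).Reachable u w ↔
      ((G.deleteEdges C).Reachable u v ↔ (G.deleteEdges C).Reachable v w) := by
  refine ⟨fun huw => ⟨fun huv => huv.symm.trans huw, fun hvw => huw.trans hvw.symm⟩, fun h => ?_⟩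
  by_cases huv : (G.deleteEdges C).Reachable u v
  · exact huv.trans (h.1 huv)
  · exact hC.reachable_of_not_reachable hG (fun hvu => huv hvu.symm) (mt h.2 huv)

open Classical in
theorem cutUse_cons (h : G.Adj u v) (p : G.Walk v w) :
    cutUse G (.cons h p) C = cutUse G p C + if s(u, v) ∈ C then 1 else 0 := by
  simp [cutUse, List.countP_cons]

theorem IsCut.even_cutUse_iff (hG : G.Connected) (hC : IsCut G C) (p : G.Walk u w) :
    Even (cutUse G p C) ↔ (G.deleteEdges C).Reachable u w := by
  induction p with
  | nil => simp [cutUse]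
  | @cons u v w h p ih =>
    rw [cutUse_cons, Nat.even_add, ih, hC.reachable_iff_reachable_iff hG u v w,
      hC.reachable_iff_of_adj h]
    split_ifs with huv <;> simp [huv]

/-- The two cases of `cutRegion` merge because a cut has only two sides. -/
theorem IsCut.mem_cutRegion_iff (hG : G.Connected) (hC : IsCut G C) {V' : Set V} :
    x ∈ cutRegion G C V' ↔ ∃ a ∈ V', (G.deleteEdges C).Reachable x a := by
  unfold cutRegion
  split_ifs with hsep
  · obtain ⟨a, ha, b, hb, hab⟩ := hsep
    refine iff_of_true trivial ?_
    by_cases hxa : (G.deleteEdges C).Reachable x a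
    · exact ⟨a, ha, hxa⟩
    · exact ⟨b, hb, by_contra fun hxb => hab (hC.reachable_of_not_reachable hG hxa hxb)⟩
  · rfl

end Cuts

section SeparatingCuts

variable {V : Type*} {G : SimpleGraph V} {𝒞 : Set (Set (Sym2 V))} {C : Set (Sym2 V)} {u v w x : V}

/-- The cuts in `𝒞` having `u` and `w` on different sides. -/
def separatingCuts (G : SimpleGraph V) (𝒞 : Set (Set (Sym2 V))) (u w : V) : Set (Set (Sym2 V)) :=
  {C ∈ 𝒞 | ¬ (G.deleteEdges C).Reachable u w}

theorem notMem_separatingCuts_iff (hC : C ∈ 𝒞) :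
    C ∉ separatingCuts G 𝒞 u w ↔ (G.deleteEdges C).Reachable u w := by
  simp [separatingCuts, hC]

theorem separatingCuts_self (G : SimpleGraph V) (𝒞 : Set (Set (Sym2 V))) (u : V) :
    separatingCuts G 𝒞 u u = ∅ := by
  simp [separatingCuts]

theorem symmDiff_separatingCuts (hG : G.Connected) (h𝒞 : ∀ C ∈ 𝒞, IsCut G C) (u v w : V) :
    separatingCuts G 𝒞 u v ∆ separatingCuts G 𝒞 v w = separatingCuts G 𝒞 u w := by
  ext C
  by_cases hC : C ∈ 𝒞
  · have := (h𝒞 C hC).reachable_iff_reachable_iff hG u v w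
    simp only [separatingCuts, Set.mem_symmDiff, Set.mem_ofPred_eq, hC, true_and]
    tauto
  · simp [separatingCuts, Set.mem_symmDiff, hC]

theorem mem_separatingCuts_iff_of_adj (h𝒞 : ∀ C ∈ 𝒞, IsCut G C) (h : G.Adj u v) :
    C ∈ separatingCuts G 𝒞 u v ↔ C ∈ 𝒞 ∧ s(u, v) ∈ C :=
  and_congr_right fun hC => by rw [(h𝒞 C hC).reachable_iff_of_adj h, not_not]

theorem IsCutPartition.exists_separatingCuts_eq_singleton (h𝒞 : IsCutPartition G 𝒞)
    (h : G.Adj u v) : ∃ C ∈ 𝒞, separatingCuts G 𝒞 u v = {C} := by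
  obtain ⟨C, hC, huv⟩ : s(u, v) ∈ ⋃₀ 𝒞 := h𝒞.2.2 ▸ G.mem_edgeSet.2 h
  refine ⟨C, hC, Set.eq_singleton_iff_unique_mem.2
    ⟨(mem_separatingCuts_iff_of_adj h𝒞.1 h).2 ⟨hC, huv⟩, fun D hD => ?_⟩⟩
  obtain ⟨hD, huvD⟩ := (mem_separatingCuts_iff_of_adj h𝒞.1 h).1 hD
  exact h𝒞.2.1.elim hD hC (Set.not_disjoint_iff.2 ⟨_, huvD, huv⟩)

theorem IsCutPartition.finite_separatingCuts (hG : G.Connected) (h𝒞 : IsCutPartition G 𝒞)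
    (u w : V) : (separatingCuts G 𝒞 u w).Finite := by
  obtain ⟨p⟩ := hG.preconnected u w
  induction p with
  | nil => simp [separatingCuts_self]
  | @cons u v w h _ ih =>
    obtain ⟨C, -, hC⟩ := h𝒞.exists_separatingCuts_eq_singleton h
    rw [← symmDiff_separatingCuts hG h𝒞.1 u v w, hC]
    exact (Set.finite_singleton C).symmDiff ih

theorem IsCutPartition.ncard_separatingCuts_of_adj (h𝒞 : IsCutPartition G 𝒞) (h : G.Adj u v) :
    (separatingCuts G 𝒞 u v).ncard = 1 :=
  Set.ncard_eq_one.2 <| (h𝒞.exists_separatingCuts_eq_singleton h).imp fun _ => And.right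

theorem IsCutPartition.ncard_separatingCuts_le (hG : G.Connected) (h𝒞 : IsCutPartition G 𝒞)
    (u v w : V) : (separatingCuts G 𝒞 u w).ncard ≤
      (separatingCuts G 𝒞 u v).ncard + (separatingCuts G 𝒞 v w).ncard := by
  rw [← symmDiff_separatingCuts hG h𝒞.1 u v w]
  exact ncard_symmDiff_le (h𝒞.finite_separatingCuts hG u v) (h𝒞.finite_separatingCuts hG v w)

theorem IsCutPartition.ncard_separatingCuts_eq_add_iff (hG : G.Connected)
    (h𝒞 : IsCutPartition G 𝒞) (u v w : V) :
    (separatingCuts G 𝒞 u w).ncard =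
        (separatingCuts G 𝒞 u v).ncard + (separatingCuts G 𝒞 v w).ncard ↔
      Disjoint (separatingCuts G 𝒞 u v) (separatingCuts G 𝒞 v w) := by
  rw [← symmDiff_separatingCuts hG h𝒞.1 u v w]
  exact ncard_symmDiff_eq_add_iff (h𝒞.finite_separatingCuts hG u v)
    (h𝒞.finite_separatingCuts hG v w)

theorem IsCutPartition.ncard_separatingCuts_le_length (hG : G.Connected)
    (h𝒞 : IsCutPartition G 𝒞) (p : G.Walk u w) : (separatingCuts G 𝒞 u w).ncard ≤ p.length := by
  induction p with
  | nil => simp [separatingCuts_self]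
  | @cons u v w h p ih =>
    have hle := h𝒞.ncard_separatingCuts_le hG u v w
    rw [h𝒞.ncard_separatingCuts_of_adj h] at hle
    rw [SimpleGraph.Walk.length_cons]
    lia

theorem cutUse_cons_le_one_iff (hG : G.Connected) (h𝒞 : ∀ C ∈ 𝒞, IsCut G C)
    (h : G.Adj u v) (p : G.Walk v w) :
    (∀ C ∈ 𝒞, cutUse G (.cons h p) C ≤ 1) ↔
      Disjoint (separatingCuts G 𝒞 u v) (separatingCuts G 𝒞 v w) ∧
        ∀ C ∈ 𝒞, cutUse G p C ≤ 1 := by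
  simp only [Set.disjoint_left, mem_separatingCuts_iff_of_adj h𝒞 h, and_imp, ← forall_and]
  refine forall₂_congr fun C hC => ?_
  have hpar := (h𝒞 C hC).even_cutUse_iff hG p
  rw [cutUse_cons, notMem_separatingCuts_iff hC, ← hpar, Nat.even_iff]
  split_ifs with huv <;> simp only [huv, forall_const, IsEmpty.forall_iff, true_and] <;> lia

theorem IsCutPartition.length_eq_ncard_separatingCuts_iff (hG : G.Connected)
    (h𝒞 : IsCutPartition G 𝒞) (p : G.Walk u w) :
    p.length = (separatingCuts G 𝒞 u w).ncard ↔ ∀ C ∈ 𝒞, cutUse G p C ≤ 1 := by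
  induction p with
  | nil => simp [cutUse, separatingCuts_self]
  | @cons u v w h p ih =>
    have hle := h𝒞.ncard_separatingCuts_le hG u v w
    have hlen := h𝒞.ncard_separatingCuts_le_length hG p
    rw [cutUse_cons_le_one_iff hG h𝒞.1, ← h𝒞.ncard_separatingCuts_eq_add_iff hG, ← ih,
      SimpleGraph.Walk.length_cons]
    rw [h𝒞.ncard_separatingCuts_of_adj h] at hle ⊢
    lia

end SeparatingCuts

section CutMetric

variable {V : Type*} {G : SimpleGraph V} {𝒞 : Set (Set (Sym2 V))} {C : Set (Sym2 V)} {u w x : V}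

/-- The graph distance counts the cuts in `𝒞` separating two vertices; equivalently, recording on
which side of each cut a vertex lies embeds `G` isometrically into a hypercube. All four conditions
of the theorem are shown to be equivalent to this one. As `Set.ncard` is `0` on infinite sets, the
definition is meant for families such as cut-partitions, for which `separatingCuts` is finite. -/
def IsCutMetric (G : SimpleGraph V) (𝒞 : Set (Set (Sym2 V))) : Prop :=
  ∀ u w : V, G.dist u w = (separatingCuts G 𝒞 u w).ncard

theorem IsCutPartition.isCutMetric_iff_exists_walk (hG : G.Connected) (h𝒞 : IsCutPartition G 𝒞) :
    IsCutMetric G 𝒞 ↔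
      ∀ u w : V, ∃ p : G.Walk u w, p.length = G.dist u w ∧ ∀ C ∈ 𝒞, cutUse G p C ≤ 1 := by
  refine forall₂_congr fun u w => ⟨fun hd => ?_, fun ⟨p, hp, huse⟩ => ?_⟩
  · obtain ⟨p, hp⟩ := hG.exists_walk_length_eq_dist u w
    exact ⟨p, hp, (h𝒞.length_eq_ncard_separatingCuts_iff hG p).1 (hp.trans hd)⟩
  · exact hp.symm.trans ((h𝒞.length_eq_ncard_separatingCuts_iff hG p).2 huse)

theorem IsCutPartition.isCutMetric_iff_forall_walk (hG : G.Connected) (h𝒞 : IsCutPartition G 𝒞) :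
    IsCutMetric G 𝒞 ↔
      ∀ (u w : V) (p : G.Walk u w), p.length = G.dist u w → ∀ C ∈ 𝒞, cutUse G p C ≤ 1 := by
  refine forall₂_congr fun u w => ⟨fun hd p hp => ?_, fun h => ?_⟩
  · exact (h𝒞.length_eq_ncard_separatingCuts_iff hG p).1 (hp.trans hd)
  · obtain ⟨p, hp⟩ := hG.exists_walk_length_eq_dist u w
    exact hp.symm.trans ((h𝒞.length_eq_ncard_separatingCuts_iff hG p).2 (h p hp))

theorem IsCutMetric.dist_add_dist_eq_iff (hd : IsCutMetric G 𝒞) (hG : G.Connected)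
    (h𝒞 : IsCutPartition G 𝒞) :
    G.dist u x + G.dist x w = G.dist u w ↔
      Disjoint (separatingCuts G 𝒞 u x) (separatingCuts G 𝒞 x w) := by
  rw [← h𝒞.ncard_separatingCuts_eq_add_iff hG, hd, hd, hd, eq_comm]

theorem IsCutPartition.isCutMetric_of_disjoint (hG : G.Connected) (h𝒞 : IsCutPartition G 𝒞)
    (h : ∀ u x w : V, G.dist u x + G.dist x w = G.dist u w →
      Disjoint (separatingCuts G 𝒞 u x) (separatingCuts G 𝒞 x w)) :
    IsCutMetric G 𝒞 := by
  intro u w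
  induction hn : G.dist u w generalizing u with
  | zero =>
    obtain rfl := hG.dist_eq_zero_iff.1 hn
    rw [separatingCuts_self, Set.ncard_empty]
  | succ n ih =>
    obtain ⟨v, huv, hvw⟩ := exists_adj_of_dist_eq_add_one hn
    have hbetween : G.dist u v + G.dist v w = G.dist u w := by
      rw [SimpleGraph.dist_eq_one_iff_adj.2 huv]
      lia
    rw [(h𝒞.ncard_separatingCuts_eq_add_iff hG u v w).2 (h u v w hbetween),
      h𝒞.ncard_separatingCuts_of_adj huv, ← ih v hvw, add_comm]

theorem IsCutMetric.gConvex_cutRegion (hd : IsCutMetric G 𝒞) (hG : G.Connected)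
    (h𝒞 : IsCutPartition G 𝒞) (hC : C ∈ 𝒞) (V' : Set V) : GConvex G (cutRegion G C V') := by
  intro u hu w hw x hx
  rw [(h𝒞.1 C hC).mem_cutRegion_iff hG] at hu hw ⊢
  obtain ⟨a, ha, hua⟩ := hu
  obtain ⟨b, hb, hwb⟩ := hw
  by_cases hux : C ∈ separatingCuts G 𝒞 u x
  · have hxw := Set.disjoint_left.1 ((hd.dist_add_dist_eq_iff hG h𝒞).1 hx) hux
    exact ⟨b, hb, ((notMem_separatingCuts_iff hC).1 hxw).trans hwb⟩
  · exact ⟨a, ha, ((notMem_separatingCuts_iff hC).1 hux).symm.trans hua⟩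

/-- A shortest path from a convex set to `x` never leaves the set: its next vertex `z` lies between
the current vertex `y` and every point of `V'` on the far side of the cut through the edge `yz`. -/
theorem IsCutMetric.iInter_cutRegion_subset (hd : IsCutMetric G 𝒞) (hG : G.Connected)
    (h𝒞 : IsCutPartition G 𝒞) {V' T : Set V} (hV' : V'.Nonempty) (hT : GConvex G T)
    (hsub : V' ⊆ T) : ⋂ C ∈ 𝒞, cutRegion G C V' ⊆ T := by
  intro x hx
  suffices h : ∀ n, ∀ y ∈ T, G.dist y x = n → x ∈ T from
    h _ _ (hsub hV'.some_mem) rfl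
  intro n
  induction n with
  | zero => exact fun y hy hyx => hG.dist_eq_zero_iff.1 hyx ▸ hy
  | succ n ih =>
    intro y hy hyx
    obtain ⟨z, hyz, hzx⟩ := exists_adj_of_dist_eq_add_one hyx
    obtain ⟨C, hC, hyzC⟩ := h𝒞.exists_separatingCuts_eq_singleton hyz
    have hbetween : G.dist y z + G.dist z x = G.dist y x := by
      rw [SimpleGraph.dist_eq_one_iff_adj.2 hyz]
      lia
    have hzxC : (G.deleteEdges C).Reachable z x := by
      rw [hd.dist_add_dist_eq_iff hG h𝒞, hyzC, Set.disjoint_singleton_left] at hbetween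
      exact (notMem_separatingCuts_iff hC).1 hbetween
    obtain ⟨a, ha, hxa⟩ := ((h𝒞.1 C hC).mem_cutRegion_iff hG).1 (Set.mem_iInter₂.1 hx C hC)
    have hzT : z ∈ T := by
      refine hT y hy a (hsub ha) z ((hd.dist_add_dist_eq_iff hG h𝒞).2 ?_)
      rw [hyzC, Set.disjoint_singleton_left]
      exact (notMem_separatingCuts_iff hC).2 (hzxC.trans hxa)
    exact ih z hzT hzx

theorem IsCutMetric.gConvexHull_eq (hd : IsCutMetric G 𝒞) (hG : G.Connected)
    (h𝒞 : IsCutPartition G 𝒞) {V' : Set V} (hV' : V'.Nonempty) :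
    GConvexHull G V' = ⋂ C ∈ 𝒞, cutRegion G C V' := by
  refine Set.Subset.antisymm (Set.subset_iInter₂ fun C hC => Set.sInter_subset_of_mem ?_)
    (hd.iInter_cutRegion_subset hG h𝒞 hV' (gConvex_gConvexHull G V') (subset_gConvexHull G V'))
  exact ⟨hd.gConvex_cutRegion hG h𝒞 hC V',
    fun a ha => ((h𝒞.1 C hC).mem_cutRegion_iff hG).2 ⟨a, ha, .refl a⟩⟩

theorem IsCutPartition.isCutMetric_of_gConvexHull_pair (hG : G.Connected)
    (h𝒞 : IsCutPartition G 𝒞)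
    (hpair : ∀ v w : V, GConvexHull G {v, w} = ⋂ C ∈ 𝒞, cutRegion G C {v, w}) :
    IsCutMetric G 𝒞 := by
  refine h𝒞.isCutMetric_of_disjoint hG fun u x w hx => Set.disjoint_left.2 ?_
  rintro C ⟨hC, hux⟩ ⟨-, hxw⟩
  have hmem : x ∈ GConvexHull G {u, w} :=
    gConvex_gConvexHull G _ u (subset_gConvexHull G _ (by simp)) w
      (subset_gConvexHull G _ (by simp)) x hx
  rw [hpair] at hmem
  obtain ⟨a, rfl | rfl, hxa⟩ :=
    ((h𝒞.1 C hC).mem_cutRegion_iff hG).1 (Set.mem_iInter₂.1 hmem C hC)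
  exacts [hux hxa.symm, hxw hxa]

end CutMetric

theorem cutPartition_conditions_equiv_general {V : Type*} (G : SimpleGraph V)
    (hconn : G.Connected) (𝒞 : Set (Set (Sym2 V))) (hpart : IsCutPartition G 𝒞) :
    ((∀ u w : V, ∃ p : G.Walk u w, p.length = G.dist u w ∧ ∀ C ∈ 𝒞, cutUse G p C ≤ 1) ↔
      (∀ (u w : V) (p : G.Walk u w), p.length = G.dist u w → ∀ C ∈ 𝒞, cutUse G p C ≤ 1)) ∧
    ((∀ (u w : V) (p : G.Walk u w), p.length = G.dist u w → ∀ C ∈ 𝒞, cutUse G p C ≤ 1) ↔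
      (∀ V' : Set V, V'.Nonempty → GConvexHull G V' = ⋂ C ∈ 𝒞, cutRegion G C V')) ∧
    ((∀ V' : Set V, V'.Nonempty → GConvexHull G V' = ⋂ C ∈ 𝒞, cutRegion G C V') ↔
      (∀ v w : V, GConvexHull G {v, w} = ⋂ C ∈ 𝒞, cutRegion G C {v, w})) := by
  have hi := hpart.isCutMetric_iff_exists_walk hconn
  have hii := hpart.isCutMetric_iff_forall_walk hconn
  have hiii (hd : IsCutMetric G 𝒞) (V' : Set V) (hV' : V'.Nonempty) :=
    hd.gConvexHull_eq hconn hpart hV'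
  have hiv := hpart.isCutMetric_of_gConvexHull_pair hconn
  exact ⟨hi.symm.trans hii,
    ⟨fun h => hiii (hii.2 h), fun h => hii.1 (hiv fun v w => h _ (Set.insert_nonempty v {w}))⟩,
    ⟨fun h v w => h _ (Set.insert_nonempty v {w}), fun h => hiii (hiv h)⟩⟩

/-- The four equivalent conditions on a cut-partition of a finite connected graph. -/
theorem cutPartition_conditions_equiv {V : Type*} [Fintype V] (G : SimpleGraph V)
    (hconn : G.Connected) (𝒞 : Set (Set (Sym2 V))) (hpart : IsCutPartition G 𝒞) :
    ((∀ u w : V, ∃ p : G.Walk u w, p.length = G.dist u w ∧ ∀ C ∈ 𝒞, cutUse G p C ≤ 1) ↔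
      (∀ (u w : V) (p : G.Walk u w), p.length = G.dist u w → ∀ C ∈ 𝒞, cutUse G p C ≤ 1)) ∧
    ((∀ (u w : V) (p : G.Walk u w), p.length = G.dist u w → ∀ C ∈ 𝒞, cutUse G p C ≤ 1) ↔
      (∀ V' : Set V, V'.Nonempty → GConvexHull G V' = ⋂ C ∈ 𝒞, cutRegion G C V')) ∧
    ((∀ V' : Set V, V'.Nonempty → GConvexHull G V' = ⋂ C ∈ 𝒞, cutRegion G C V') ↔
      (∀ v w : V, GConvexHull G {v, w} = ⋂ C ∈ 𝒞, cutRegion G C {v, w})) :=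
  cutPartition_conditions_equiv_general G hconn 𝒞 hpart
end

section
/- Let 𝒞 be a cut-partition of a finite connected simple graph G such that no shortest path in G uses two edges of the same cut C ∈ 𝒞. Then for every C ∈ 𝒞, both sides C⁺ and C⁻ of C are convex vertex sets of G. -/
/-- A side of a cut `C`: the vertex set of a connected component of `G` minus `C`. -/
def IsSide {V : Type*} (G : SimpleGraph V) (C : Set (Sym2 V)) (S : Set V) : Prop :=
  ∃ x : V, S = {y : V | (G.deleteEdges C).Reachable y x}

section

variable {V : Type*} {G : SimpleGraph V} {C : Set (Sym2 V)} {u x w : V}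

lemma cutUse_eq_zero_iff {p : G.Walk u w} : cutUse G p C = 0 ↔ ∀ e ∈ p.edges, e ∉ C := by
  simp only [cutUse, List.countP_eq_zero, decide_eq_true_eq]

lemma cutUse_append (p : G.Walk u x) (q : G.Walk x w) (C : Set (Sym2 V)) :
    cutUse G (p.append q) C = cutUse G p C + cutUse G q C := by
  simp only [cutUse, SimpleGraph.Walk.edges_append, List.countP_append]

lemma cutUse_pos_of_not_reachable_deleteEdges (p : G.Walk u w)
    (h : ¬ (G.deleteEdges C).Reachable u w) : 0 < cutUse G p C :=
  Nat.pos_of_ne_zero fun hp => h ⟨p.toDeleteEdges C (cutUse_eq_zero_iff.mp hp)⟩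

theorem sides_gconvex_general {S : Set V} (hG : G.Preconnected)
    (hgeo : ∀ (u w : V) (p : G.Walk u w), p.length = G.dist u w → cutUse G p C ≤ 1)
    (hS : IsSide G C S) : GConvex G S := by
  obtain ⟨c, rfl⟩ := hS
  intro u hu w hw x hx
  by_contra hxc
  obtain ⟨p, hp⟩ := (hG u x).exists_walk_length_eq_dist
  obtain ⟨q, hq⟩ := (hG x w).exists_walk_length_eq_dist
  have hpq : (p.append q).length = G.dist u w := by
    rw [SimpleGraph.Walk.length_append, hp, hq, hx]
  have hp_pos : 0 < cutUse G p C :=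
    cutUse_pos_of_not_reachable_deleteEdges p fun hux => hxc (hux.symm.trans hu)
  have hq_pos : 0 < cutUse G q C :=
    cutUse_pos_of_not_reachable_deleteEdges q fun hxw => hxc (hxw.trans hw)
  have hle : cutUse G p C + cutUse G q C ≤ 1 := cutUse_append p q C ▸ hgeo u w _ hpq
  omega

end

/-- If no shortest path uses two edges of the same cut of a cut-partition,
then both sides of every cut are convex. -/
theorem sides_gconvex {V : Type*} [Fintype V] (G : SimpleGraph V)
    (hconn : G.Connected) (𝒞 : Set (Set (Sym2 V))) (hpart : IsCutPartition G 𝒞)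
    (hgeo : ∀ (u w : V) (p : G.Walk u w), p.length = G.dist u w →
      ∀ C ∈ 𝒞, cutUse G p C ≤ 1) :
    ∀ C ∈ 𝒞, ∀ S : Set V, IsSide G C S → GConvex G S := by
  intro C hC S hS
  exact sides_gconvex_general hconn.preconnected (fun u w p hp => hgeo u w p hp C hC) hS
end

section
/- Let G be a finite partial cube and v a vertex of G. Then the lattice 𝓛_G^v of convex vertex sets of G containing v, ordered by inclusion, is upper locally distributive: every element of 𝓛_G^v has a unique inclusion-minimal set M of meet-irreducible elements of 𝓛_G^v whose meet (intersection) equals it. -/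
/-- A partial cube: a graph admitting an isometric embedding into a hypercube. -/
def IsPartialCube {V : Type*} (G : SimpleGraph V) : Prop :=
  ∃ (d : ℕ) (φ : V → Fin d → Bool), ∀ u v : V, G.dist u v = hammingDist (φ u) (φ v)

/-- Membership in the lattice `𝓛_G^v` of convex vertex sets of `G` containing `v`. -/
def ConvCont {V : Type*} (G : SimpleGraph V) (v : V) (S : Set V) : Prop :=
  GConvex G S ∧ v ∈ S

/-- `B` covers `A` in the inclusion order `𝓛_G^v` on convex sets containing `v`. -/
def CoversIn {V : Type*} (G : SimpleGraph V) (v : V) (A B : Set V) : Prop :=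
  A ⊂ B ∧ ∀ T : Set V, ConvCont G v T → A ⊂ T → T ⊂ B → False

/-- An element of `𝓛_G^v` is meet-irreducible if it is covered by exactly one element. -/
def MeetIrredIn {V : Type*} (G : SimpleGraph V) (v : V) (m : Set V) : Prop :=
  ConvCont G v m ∧ ∃! m' : Set V, ConvCont G v m' ∧ CoversIn G v m m'

/-!
Fix an isometric embedding into a hypercube. An edge leaving a convex set `S ∋ v` flips exactly one
coordinate, and all of `S` lies in the halfspace of that coordinate containing `v`. The halfspaces
of these *boundary coordinates* intersect in `S`, because a geodesic from `v` to a vertex outside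
`S` has to leave `S` and never flips a coordinate back. The upper covers of `S` correspond to its
boundary coordinates: crossing the coordinate `i` gives up exactly the constraint that the halfspace
of `i` imposes. Hence the meet-irreducibles are the convex sets with a single boundary coordinate,
each of them is the halfspace of that coordinate, and an edge leaving `S` forces the halfspace of
its coordinate into every family of meet-irreducibles with intersection `S`.
-/

theorem encard_ne_add_encard_ne_eq_iff {ι : Type*} {β : ι → Type*} {f g h : ∀ i, β i}
    (hfin : {i | f i ≠ h i}.Finite) :
    {i | f i ≠ g i}.encard + {i | g i ≠ h i}.encard = {i | f i ≠ h i}.encard ↔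
      ∀ i, g i = f i ∨ g i = h i := by
  have hsub : {i | f i ≠ h i} ⊆ {i | f i ≠ g i} ∪ {i | g i ≠ h i} := by
    intro i hfh
    by_cases hfg : f i = g i
    · exact .inr fun hgh => hfh (hfg.trans hgh)
    · exact .inl hfg
  constructor
  · intro hsum i
    have hunion : ({i | f i ≠ g i} ∪ {i | g i ≠ h i}).encard ≠ ⊤ :=
      ((Set.encard_union_le _ _).trans_lt (hsum ▸ hfin.encard_lt_top)).ne
    have hinter : ({i | f i ≠ g i} ∩ {i | g i ≠ h i}).encard ≤ 0 := by
      rw [← ENat.add_le_add_iff_left hunion, Set.encard_union_add_encard_inter, hsum, add_zero]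
      exact Set.encard_le_encard hsub
    have hempty := Set.encard_eq_zero.1 (nonpos_iff_eq_zero.1 hinter)
    by_contra! hi
    exact hempty.le ⟨hi.1.symm, hi.2⟩
  · intro hg
    have hdisj : Disjoint {i | f i ≠ g i} {i | g i ≠ h i} :=
      Set.disjoint_left.2 fun i hfg hgh => (hg i).elim (Ne.symm hfg) hgh
    have hunion : {i | f i ≠ g i} ∪ {i | g i ≠ h i} ⊆ {i | f i ≠ h i} := by
      rintro i (hfg | hgh)
      · exact fun hfh => hfg (hfh.trans ((hg i).resolve_left (Ne.symm hfg)).symm)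
      · exact fun hfh => hgh (((hg i).resolve_right hgh).trans hfh)
    rw [← Set.encard_union_eq hdisj, hunion.antisymm hsub]

theorem exists_adj_notMem_dist_add_dist_eq {V : Type*} {G : SimpleGraph V} {v x : V}
    (hvx : G.Reachable v x) {S : Set V} (hv : v ∈ S) (hx : x ∉ S) :
    ∃ y ∈ S, ∃ z ∉ S, G.Adj y z ∧ G.dist v z + G.dist z x = G.dist v x := by
  classical
  obtain ⟨p, hp⟩ := hvx.exists_walk_length_eq_dist
  obtain ⟨e, he, hy, hz⟩ := p.exists_boundary_dart S hv hx
  have hmem : e.snd ∈ p.support := p.dart_snd_mem_support_of_mem_darts he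
  refine ⟨e.fst, hy, e.snd, hz, e.adj, ?_⟩
  rw [← SimpleGraph.length_eq_dist_of_subwalk hp (p.isSubwalk_takeUntil hmem),
    ← SimpleGraph.length_eq_dist_of_subwalk hp (p.isSubwalk_dropUntil hmem), ← hp,
    ← SimpleGraph.Walk.length_append, p.take_spec hmem]

section Hypercube

variable {V ι : Type*} {G : SimpleGraph V} {φ : V → ι → Bool} {v : V} {S T : Set V} {i : ι}

/-- An isometric embedding of `G` into a hypercube of arbitrary, possibly infinite, dimension. The
extended cardinality makes any two vertices differ in only finitely many coordinates. -/
def IsHypercubeEmbedding (G : SimpleGraph V) (φ : V → ι → Bool) : Prop :=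
  ∀ u w : V, {i | φ u i ≠ φ w i}.encard = G.dist u w

/-- The halfspace of the coordinate `i` on the side of `v`. -/
def halfspace (φ : V → ι → Bool) (v : V) (i : ι) : Set V :=
  {x | φ x i = φ v i}

/-- The boundary coordinates of `S`: those flipped by an edge leaving `S`. -/
def boundaryCoords (G : SimpleGraph V) (φ : V → ι → Bool) (S : Set V) : Set ι :=
  {i | ∃ y ∈ S, ∃ z ∉ S, G.Adj y z ∧ φ y i ≠ φ z i}

/-- The intersection of the halfspaces containing `S`, except the one of the coordinate `i`. For a
boundary coordinate `i` of a convex set `S` this is the upper cover of `S` across `i`. -/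
def coverAcross (φ : V → ι → Bool) (v : V) (S : Set V) (i : ι) : Set V :=
  ⋂₀ (halfspace φ v '' {j | S ⊆ halfspace φ v j ∧ j ≠ i})

theorem IsPartialCube.exists_isHypercubeEmbedding (hG : IsPartialCube G) :
    ∃ (d : ℕ) (φ : V → Fin d → Bool), IsHypercubeEmbedding G φ := by
  obtain ⟨d, φ, hφ⟩ := hG
  refine ⟨d, φ, fun u w => ?_⟩
  rw [hφ, hammingDist, ← Set.encard_coe_eq_coe_finsetCard, Finset.coe_filter_univ]

theorem ConvCont.sInter {F : Set (Set V)} (hF : ∀ T ∈ F, ConvCont G v T) :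
    ConvCont G v (⋂₀ F) :=
  ⟨fun u hu w hw x hx T hT => (hF T hT).1 u (hu T hT) w (hw T hT) x hx,
    fun T hT => (hF T hT).2⟩

theorem subset_coverAcross : S ⊆ coverAcross φ v S i := by
  rintro s hs _ ⟨j, ⟨hSj, -⟩, rfl⟩
  exact hSj hs

theorem coverAcross_subset_halfspace {j : ι} (hS : S ⊆ halfspace φ v j) (hji : j ≠ i) :
    coverAcross φ v S i ⊆ halfspace φ v j :=
  Set.sInter_subset_of_mem (Set.mem_image_of_mem _ ⟨hS, hji⟩)

namespace IsHypercubeEmbedding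

theorem dist_add_dist_eq_iff (hφ : IsHypercubeEmbedding G φ) {u x w : V} :
    G.dist u x + G.dist x w = G.dist u w ↔ ∀ i, φ x i = φ u i ∨ φ x i = φ w i := by
  have hfin : {i | φ u i ≠ φ w i}.Finite :=
    Set.encard_ne_top_iff.1 (hφ u w ▸ ENat.natCast_ne_top _)
  rw [← encard_ne_add_encard_ne_eq_iff hfin, hφ, hφ, hφ]
  norm_cast

theorem existsUnique_ne_of_adj (hφ : IsHypercubeEmbedding G φ) {y z : V} (hyz : G.Adj y z) :
    ∃! i, φ y i ≠ φ z i := by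
  have hcard : {i | φ y i ≠ φ z i}.encard = 1 := by
    rw [hφ, SimpleGraph.dist_eq_one_iff_adj.2 hyz, Nat.cast_one]
  obtain ⟨i, hi⟩ := Set.encard_eq_one.1 hcard
  exact ⟨i, hi.ge rfl, fun j hj => hi.le hj⟩

theorem convCont_halfspace (hφ : IsHypercubeEmbedding G φ) (v : V) (i : ι) :
    ConvCont G v (halfspace φ v i) := by
  refine ⟨fun u hu w hw x hx => ?_, rfl⟩
  rcases hφ.dist_add_dist_eq_iff.1 hx i with hxu | hxw
  · exact hxu.trans hu
  · exact hxw.trans hw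

theorem convCont_coverAcross (hφ : IsHypercubeEmbedding G φ) :
    ConvCont G v (coverAcross φ v S i) :=
  ConvCont.sInter (Set.forall_mem_image.2 fun j _ => hφ.convCont_halfspace v j)

theorem subset_halfspace (hφ : IsHypercubeEmbedding G φ) (hS : ConvCont G v S)
    (hi : i ∈ boundaryCoords G φ S) : S ⊆ halfspace φ v i := by
  obtain ⟨y, hy, z, hz, hyz, hne⟩ := hi
  have hconst : ∀ s ∈ S, φ s i = φ y i := by
    intro s hs
    by_contra hsy
    -- Since `s` lies beyond the flip, `z` is on a geodesic from `s` to `y`.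
    refine hz (hS.1 s hs y hy z (hφ.dist_add_dist_eq_iff.2 fun j => ?_))
    by_cases hzy : φ z j = φ y j
    · exact .inr hzy
    · obtain rfl := (hφ.existsUnique_ne_of_adj hyz).unique hne (Ne.symm hzy)
      exact .inl ((Bool.eq_not.2 hzy).trans (Bool.eq_not.2 hsy).symm)
  exact fun s hs => (hconst s hs).trans (hconst v hS.2).symm

theorem exists_boundaryCoords_notMem_halfspace (hφ : IsHypercubeEmbedding G φ)
    (hconn : G.Connected) (hS : ConvCont G v S) {x : V} (hx : x ∉ S) :
    ∃ i ∈ boundaryCoords G φ S, x ∉ halfspace φ v i := by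
  obtain ⟨y, hy, z, hz, hyz, hdist⟩ := exists_adj_notMem_dist_add_dist_eq (hconn v x) hS.2 hx
  obtain ⟨i, hi, -⟩ := hφ.existsUnique_ne_of_adj hyz
  have hbdry : i ∈ boundaryCoords G φ S := ⟨y, hy, z, hz, hyz, hi⟩
  have hyv : φ y i = φ v i := hφ.subset_halfspace hS hbdry hy
  have hzv : φ z i ≠ φ v i := fun hzv => hi (hyv.trans hzv.symm)
  have hzx : φ z i = φ x i := (hφ.dist_add_dist_eq_iff.1 hdist i).resolve_left hzv
  exact ⟨i, hbdry, fun hxv => hzv (hzx.trans hxv)⟩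

theorem sInter_halfspace_boundaryCoords (hφ : IsHypercubeEmbedding G φ) (hconn : G.Connected)
    (hS : ConvCont G v S) : ⋂₀ (halfspace φ v '' boundaryCoords G φ S) = S := by
  refine Set.Subset.antisymm (fun x hx => ?_) ?_
  · by_contra hxS
    obtain ⟨i, hi, hxi⟩ := hφ.exists_boundaryCoords_notMem_halfspace hconn hS hxS
    exact hxi (hx _ (Set.mem_image_of_mem _ hi))
  · exact Set.subset_sInter (Set.forall_mem_image.2 fun i hi => hφ.subset_halfspace hS hi)

theorem not_coverAcross_subset_halfspace (hφ : IsHypercubeEmbedding G φ) (hS : ConvCont G v S)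
    (hi : i ∈ boundaryCoords G φ S) : ¬ coverAcross φ v S i ⊆ halfspace φ v i := by
  have hSi := hφ.subset_halfspace hS hi
  obtain ⟨y, hy, z, -, hyz, hne⟩ := hi
  have hzcover : z ∈ coverAcross φ v S i := by
    rintro _ ⟨j, ⟨hSj, hji⟩, rfl⟩
    have hyzj : φ y j = φ z j := by
      by_contra hnej
      exact hji ((hφ.existsUnique_ne_of_adj hyz).unique hnej hne)
    exact hyzj.symm.trans (hSj hy)
  exact fun hle => hne ((hSi hy).trans (hle hzcover).symm)

theorem coverAcross_subset (hφ : IsHypercubeEmbedding G φ) (hconn : G.Connected)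
    (hT : ConvCont G v T) (hST : S ⊆ T) (hTi : ¬ T ⊆ halfspace φ v i) :
    coverAcross φ v S i ⊆ T := by
  rw [← hφ.sInter_halfspace_boundaryCoords hconn hT]
  refine Set.subset_sInter (Set.forall_mem_image.2 fun j hj => ?_)
  have hTj := hφ.subset_halfspace hT hj
  exact coverAcross_subset_halfspace (hST.trans hTj) fun hji => hTi (hji ▸ hTj)

theorem coversIn_coverAcross (hφ : IsHypercubeEmbedding G φ) (hconn : G.Connected)
    (hS : ConvCont G v S) (hi : i ∈ boundaryCoords G φ S) :
    CoversIn G v S (coverAcross φ v S i) := by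
  have hnot := hφ.not_coverAcross_subset_halfspace hS hi
  refine ⟨⟨subset_coverAcross, fun hle => hnot (hle.trans (hφ.subset_halfspace hS hi))⟩, ?_⟩
  intro T hT hST hTcover
  obtain ⟨x, hxT, hxS⟩ := Set.exists_of_ssubset hST
  obtain ⟨j, hj, hxj⟩ := hφ.exists_boundaryCoords_notMem_halfspace hconn hS hxS
  have hji : j = i := by
    by_contra hji
    exact hxj (coverAcross_subset_halfspace (hφ.subset_halfspace hS hj) hji (hTcover.1 hxT))
  subst hji
  exact hTcover.2 (hφ.coverAcross_subset hconn hT hST.1 fun hle => hxj (hle hxT))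

theorem exists_eq_coverAcross_of_coversIn (hφ : IsHypercubeEmbedding G φ) (hconn : G.Connected)
    (hS : ConvCont G v S) (hT : ConvCont G v T) (hST : CoversIn G v S T) :
    ∃ i ∈ boundaryCoords G φ S, coverAcross φ v S i = T := by
  obtain ⟨x, hxT, hxS⟩ := Set.exists_of_ssubset hST.1
  obtain ⟨i, hi, hxi⟩ := hφ.exists_boundaryCoords_notMem_halfspace hconn hS hxS
  have hle := hφ.coverAcross_subset hconn hT hST.1.1 fun hle => hxi (hle hxT)
  refine ⟨i, hi, by_contra fun hne => ?_⟩
  exact hST.2 _ hφ.convCont_coverAcross (hφ.coversIn_coverAcross hconn hS hi).1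
    (hle.ssubset_of_ne hne)

theorem bijOn_coverAcross (hφ : IsHypercubeEmbedding G φ) (hconn : G.Connected)
    (hS : ConvCont G v S) :
    Set.BijOn (coverAcross φ v S) (boundaryCoords G φ S)
      {T | ConvCont G v T ∧ CoversIn G v S T} := by
  refine ⟨fun i hi => ⟨hφ.convCont_coverAcross, hφ.coversIn_coverAcross hconn hS hi⟩, ?_,
    fun T hT => hφ.exists_eq_coverAcross_of_coversIn hconn hS hT.1 hT.2⟩
  intro i hi j _ hij
  by_contra hne
  have hle := coverAcross_subset_halfspace (hφ.subset_halfspace hS hi) hne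
  exact hφ.not_coverAcross_subset_halfspace hS hi (hij ▸ hle)

theorem meetIrredIn_iff (hφ : IsHypercubeEmbedding G φ) (hconn : G.Connected) :
    MeetIrredIn G v S ↔ ConvCont G v S ∧ ∃! i, i ∈ boundaryCoords G φ S := by
  refine and_congr_right fun hS => ?_
  have hbij := hφ.bijOn_coverAcross hconn hS
  constructor
  · rintro ⟨T, hT, hunique⟩
    obtain ⟨i, hi, -⟩ := hbij.surjOn hT
    exact ⟨i, hi, fun j hj => hbij.injOn hj hi
      ((hunique _ (hbij.mapsTo hj)).trans (hunique _ (hbij.mapsTo hi)).symm)⟩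
  · rintro ⟨i, hi, hunique⟩
    refine ⟨_, hbij.mapsTo hi, fun T hT => ?_⟩
    obtain ⟨j, hj, rfl⟩ := hbij.surjOn hT
    rw [hunique j hj]

theorem meetIrredIn_halfspace (hφ : IsHypercubeEmbedding G φ) (hconn : G.Connected)
    (hS : ConvCont G v S) (hi : i ∈ boundaryCoords G φ S) :
    MeetIrredIn G v (halfspace φ v i) := by
  have hSi := hφ.subset_halfspace hS hi
  obtain ⟨y, hy, z, -, hyz, hne⟩ := hi
  refine (hφ.meetIrredIn_iff hconn).2 ⟨hφ.convCont_halfspace v i, i, ?_, ?_⟩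
  · exact ⟨y, hSi hy, z, fun hz => hne ((hSi hy).trans hz.symm), hyz, hne⟩
  · rintro j ⟨a, ha, b, hb, hab, hnej⟩
    exact (hφ.existsUnique_ne_of_adj hab).unique hnej fun heq => hb (heq.symm.trans ha)

theorem eq_halfspace_of_meetIrredIn (hφ : IsHypercubeEmbedding G φ) (hconn : G.Connected)
    (hS : MeetIrredIn G v S) (hi : i ∈ boundaryCoords G φ S) : S = halfspace φ v i := by
  obtain ⟨hSconv, hunique⟩ := (hφ.meetIrredIn_iff hconn).1 hS
  have hsingle : boundaryCoords G φ S = {i} :=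
    Set.eq_singleton_iff_unique_mem.2 ⟨hi, fun j hj => hunique.unique hj hi⟩
  rw [← hφ.sInter_halfspace_boundaryCoords hconn hSconv, hsingle, Set.image_singleton,
    Set.sInter_singleton]

theorem isLeast_halfspace_boundaryCoords (hφ : IsHypercubeEmbedding G φ) (hconn : G.Connected)
    (hS : ConvCont G v S) :
    IsLeast {M | (∀ m ∈ M, MeetIrredIn G v m) ∧ ⋂₀ M = S}
      (halfspace φ v '' boundaryCoords G φ S) := by
  refine ⟨⟨Set.forall_mem_image.2 fun i hi => hφ.meetIrredIn_halfspace hconn hS hi,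
    hφ.sInter_halfspace_boundaryCoords hconn hS⟩, ?_⟩
  rintro M ⟨hM, rfl⟩ _ ⟨i, ⟨y, hy, z, hz, hyz, hne⟩, rfl⟩
  obtain ⟨m, hmM, hzm⟩ : ∃ m ∈ M, z ∉ m := by simpa using hz
  have hi : i ∈ boundaryCoords G φ m := ⟨y, hy m hmM, z, hzm, hyz, hne⟩
  exact hφ.eq_halfspace_of_meetIrredIn hconn (hM m hmM) hi ▸ hmM

end IsHypercubeEmbedding

end Hypercube

theorem latticeConvexSets_uld_general {V ι : Type*} (G : SimpleGraph V) (hconn : G.Connected)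
    (φ : V → ι → Bool) (hφ : IsHypercubeEmbedding G φ) (v : V) :
    ∀ S : Set V, ConvCont G v S →
      ∃! M : Set (Set V), (∀ m ∈ M, MeetIrredIn G v m) ∧ ⋂₀ M = S ∧
        ∀ M' : Set (Set V), M' ⊂ M → ⋂₀ M' ≠ S := by
  intro S hS
  obtain ⟨⟨hirred, hmeet⟩, hleast⟩ := hφ.isLeast_halfspace_boundaryCoords hconn hS
  refine ⟨_, ⟨hirred, hmeet, fun M hlt hM => ?_⟩, fun M ⟨hMirred, hM, hmin⟩ => ?_⟩
  · exact hlt.2 (hleast ⟨fun m hm => hirred m (hlt.1 hm), hM⟩)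
  · by_contra hne
    exact hmin _ ((hleast ⟨hMirred, hM⟩).ssubset_of_ne (Ne.symm hne)) hmeet

/-- For a finite partial cube `G` and a vertex `v`, the lattice `𝓛_G^v` of convex sets
containing `v` is upper locally distributive: every element has a unique
inclusion-minimal set of meet-irreducible elements whose meet (intersection) equals it. -/
theorem latticeConvexSets_uld {V : Type*} [Fintype V] (G : SimpleGraph V)
    (hconn : G.Connected) (hpc : IsPartialCube G) (v : V) :
    ∀ S : Set V, ConvCont G v S →
      ∃! M : Set (Set V), (∀ m ∈ M, MeetIrredIn G v m) ∧ ⋂₀ M = S ∧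
        ∀ M' : Set (Set V), M' ⊂ M → ⋂₀ M' ≠ S := by
  obtain ⟨d, φ, hφ⟩ := hpc.exists_isHypercubeEmbedding
  exact latticeConvexSets_uld_general G hconn φ hφ v
end
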